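/- arXiv:2308.06384 — 2 statements merged into one kernel-verified Lean document; each statement's English description precedes it below -/
import Mathlib

section
/- Let d ≥ 1, let H be a bounded self-adjoint operator on ℓ²(ℤ^d) with rapidly decaying matrix entries, and let f : ℝ → ℂ be a Schwartz function. Then f(H) also has rapidly decaying matrix entries: for every μ ≥ 0 there exists C ≥ 0 such that |(f(H))_{ij}| ≤ C(1+‖i−j‖)^{−μ} for all i, j ∈ ℤ^d. -/
open scoped InnerProductSpace
open ContinuousLinearMap

/-- The standard orthonormal basis of `ℓ²(ℤ^d)`. -/
noncomputable def stdBasis {d : ℕ} (i : Fin d → ℤ) : lp (fun _ : Fin d → ℤ => ℂ) 2 :=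
  lp.single 2 i 1

/-- Matrix entries `T_{ij} = ⟪e_i, T e_j⟫` of a bounded operator on `ℓ²(ℤ^d)`. -/
noncomputable def matrixEntry {d : ℕ}
    (T : lp (fun _ : Fin d → ℤ => ℂ) 2 →L[ℂ] lp (fun _ : Fin d → ℤ => ℂ) 2)
    (i j : Fin d → ℤ) : ℂ :=
  ⟪stdBasis i, T (stdBasis j)⟫_ℂ

/-- The Euclidean norm on `ℤ^d`. -/
noncomputable def euclNorm {d : ℕ} (v : Fin d → ℤ) : ℝ :=
  Real.sqrt (∑ k : Fin d, ((v k : ℝ)) ^ 2)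

/-- A bounded operator on `ℓ²(ℤ^d)` has rapidly decaying matrix entries if for every `μ ≥ 0`
there is `C ≥ 0` with `|T_{ij}| ≤ C (1 + ‖i - j‖)^{-μ}` for all `i, j`. -/
def RapidDecay {d : ℕ}
    (T : lp (fun _ : Fin d → ℤ => ℂ) 2 →L[ℂ] lp (fun _ : Fin d → ℤ => ℂ) 2) : Prop :=
  ∀ μ : ℝ, 0 ≤ μ → ∃ C : ℝ, 0 ≤ C ∧
    ∀ i j : Fin d → ℤ, ‖matrixEntry T i j‖ ≤ C * (1 + euclNorm (i - j)) ^ (-μ)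

section Abstract
variable {A : Type*} [NormedRing A] [NormedAlgebra ℝ A]

/-- The commutator `a ↦ M a - a M` as a bounded map. -/
noncomputable def adL (M : A) : A →L[ℝ] A :=
  ContinuousLinearMap.mul ℝ A M - (ContinuousLinearMap.mul ℝ A).flip M

lemma adL_apply (M a : A) : adL M a = M * a - a * M := by
  simp [adL]

lemma adL_mul (M a b : A) : adL M (a * b) = adL M a * b + a * adL M b := by
  simp only [adL_apply]; noncomm_ring

lemma adL_pow_succ (M a : A) (n : ℕ) : (adL M ^ (n + 1)) a = adL M ((adL M ^ n) a) := by
  rw [pow_succ']; rfl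

lemma adL_pow_mul (M a b : A) (n : ℕ) :
    (adL M ^ n) (a * b) = ∑ ij ∈ Finset.HasAntidiagonal.antidiagonal n,
      n.choose ij.1 • ((adL M ^ ij.1) a * (adL M ^ ij.2) b) := by
  induction n with
  | zero => simp
  | succ n ih =>
    rw [Finset.sum_antidiagonal_choose_succ_nsmul
      (fun i j => (adL M ^ i) a * (adL M ^ j) b) n, adL_pow_succ, ih, map_sum,
      ← Finset.sum_add_distrib]
    refine Finset.sum_congr rfl fun ij hij => ?_
    rw [map_nsmul, adL_mul, adL_pow_succ, adL_pow_succ, smul_add, add_comm,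
      ← Nat.choose_symm_of_eq_add (Finset.HasAntidiagonal.mem_antidiagonal.1 hij).symm]

lemma adL_pow_succ_one (M : A) (n : ℕ) : (adL M ^ (n + 1)) 1 = 0 := by
  rw [pow_succ]
  change (adL M ^ n) (adL M 1) = 0
  simp [adL_apply]

variable [CompleteSpace A]

lemma adL_exp_bound (c : ℕ → ℝ) (m : ℕ) : ∃ C : ℝ, 0 ≤ C ∧ ∀ M X : A,
    (∀ t : ℝ, ‖NormedSpace.exp (t • X)‖ ≤ 1) → (∀ k, ‖(adL M ^ k) X‖ ≤ c k) →
    ∀ t : ℝ, ‖(adL M ^ m) (NormedSpace.exp (t • X))‖ ≤ C * (1 + |t|) ^ m := by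
  induction m using Nat.strong_induction_on with
  | _ m ih =>
  rcases m with _ | m
  · exact ⟨1, zero_le_one, fun M X h1 _ t => by simpa using h1 t⟩
  choose! C hC0 hC using ih
  refine ⟨∑ ij ∈ Finset.HasAntidiagonal.antidiagonal m,
    ((m + 1).choose (ij.1 + 1) : ℝ) * (|c (ij.1 + 1)| * C ij.2), ?_, ?_⟩
  · refine Finset.sum_nonneg fun ij hij => ?_
    have := hC0 ij.2 (by have := Finset.HasAntidiagonal.mem_antidiagonal.1 hij; omega)
    positivity
  intro M X h1 hc T
  set K : ℝ := ∑ ij ∈ Finset.HasAntidiagonal.antidiagonal m,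
    ((m + 1).choose (ij.1 + 1) : ℝ) * (|c (ij.1 + 1)| * C ij.2) with hK
  set U : ℝ → A := fun t => NormedSpace.exp (t • X) with hU
  have hUd : ∀ t, HasDerivAt U (X * U t) t := fun t => hasDerivAt_exp_smul_const' X t
  have hVd : ∀ t : ℝ, HasDerivAt (fun t => U (-t)) (-(U (-t) * X)) t := fun t => by
    have := (hasDerivAt_exp_smul_const X (-t)).scomp t (hasDerivAt_neg t)
    have h : HasDerivAt (fun t => U (-t)) ((-1 : ℝ) • (U (-t) * X)) t := this
    rwa [neg_one_smul] at h
  have hDd : ∀ t, HasDerivAt (fun t => (adL M ^ (m + 1)) (U t))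
      ((adL M ^ (m + 1)) (X * U t)) t := fun t =>
    (adL M ^ (m + 1)).hasFDerivAt.comp_hasDerivAt t (hUd t)
  let S : ℝ → A := fun t => ∑ ij ∈ Finset.HasAntidiagonal.antidiagonal m,
    (m + 1).choose (ij.1 + 1) • ((adL M ^ (ij.1 + 1)) X * (adL M ^ ij.2) (U t))
  have hfd : ∀ t, HasDerivAt (fun t => U (-t) * (adL M ^ (m + 1)) (U t)) (U (-t) * S t) t := by
    intro t
    have key : U (-t) * S t = -(U (-t) * X) * (adL M ^ (m + 1)) (U t) +
        U (-t) * (adL M ^ (m + 1)) (X * U t) := ?_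
    · rw [key]; exact (hVd t).mul (hDd t)
    rw [adL_pow_mul, Finset.Nat.sum_antidiagonal_succ]
    simp only [S, Nat.choose_zero_right, one_smul, pow_zero, one_apply_eq_self]
    noncomm_ring
  have hSb : ∀ t, |t| ≤ |T| → ‖U (-t) * S t‖ ≤ K * (1 + |T|) ^ m := by
    intro t ht
    refine (norm_mul_le _ _).trans ?_
    refine (mul_le_of_le_one_left (norm_nonneg _) (h1 _)).trans ?_
    refine (norm_sum_le _ _).trans ?_
    rw [hK, Finset.sum_mul]
    refine Finset.sum_le_sum fun ij hij => ?_
    have hij' := Finset.HasAntidiagonal.mem_antidiagonal.1 hij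
    have hlt : ij.2 < m + 1 := by omega
    have hC0' := hC0 ij.2 hlt
    refine (norm_nsmul_le).trans ?_
    rw [mul_assoc]
    gcongr
    refine (norm_mul_le _ _).trans ?_
    rw [mul_assoc]
    gcongr
    · exact (hc _).trans (le_abs_self _)
    · refine (hC ij.2 hlt M X h1 hc t).trans ?_
      gcongr
      calc (1 + |t|) ^ ij.2 ≤ (1 + |T|) ^ ij.2 := by gcongr
        _ ≤ (1 + |T|) ^ m := pow_le_pow_right₀ (by linarith [abs_nonneg T]) (by omega)
  have hmv := (convex_Icc (-|T|) |T|).norm_image_sub_le_of_norm_hasDerivWithin_le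
    (f := fun t => U (-t) * (adL M ^ (m + 1)) (U t)) (f' := fun t => U (-t) * S t)
    (fun t _ => (hfd t).hasDerivWithinAt) (fun t ht => hSb t (abs_le.2 ht))
    (x := 0) (y := T) (abs_le.1 (by simp)) (abs_le.1 le_rfl)
  have h0 : (adL M ^ (m + 1)) (U 0) = 0 := by
    have : U 0 = 1 := by simp [hU]
    rw [this, adL_pow_succ_one]
  simp only [h0, mul_zero, sub_zero, Real.norm_eq_abs] at hmv
  have hinv : U T * U (-T) = 1 := by
    letI : NormedAlgebra ℚ A := NormedAlgebra.restrictScalars ℚ ℝ A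
    simp only [hU]
    rw [← NormedSpace.exp_add_of_commute (by
      exact (Commute.refl X).smul_left T |>.smul_right (-T))]
    simp
  calc ‖(adL M ^ (m + 1)) (U T)‖ = ‖U T * (U (-T) * (adL M ^ (m + 1)) (U T))‖ := by
        rw [← mul_assoc, hinv, one_mul]
    _ ≤ 1 * (K * (1 + |T|) ^ m * |T|) := by
        refine (norm_mul_le _ _).trans ?_
        gcongr
        exact h1 T
    _ ≤ K * (1 + |T|) ^ (m + 1) := by
        have : 0 ≤ K * (1 + |T|) ^ m := (norm_nonneg _).trans (hSb 0 (by simp))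
        rw [one_mul, pow_succ, ← mul_assoc]
        gcongr
        linarith
end Abstract

noncomputable abbrev L2 (d : ℕ) : Type := lp (fun _ : Fin d → ℤ => ℂ) 2

lemma euclNorm_eq {d : ℕ} (v : Fin d → ℤ) :
    euclNorm v = ‖(WithLp.toLp 2 (fun k => (v k : ℝ)) : EuclideanSpace ℝ (Fin d))‖ := by
  simp [euclNorm, EuclideanSpace.norm_eq]

lemma euclNorm_nonneg {d : ℕ} (v : Fin d → ℤ) : 0 ≤ euclNorm v := Real.sqrt_nonneg _

lemma euclNorm_abs_sub {d : ℕ} (v w : Fin d → ℤ) :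
    |euclNorm v - euclNorm w| ≤ euclNorm (v - w) := by
  have := abs_norm_sub_norm_le (WithLp.toLp 2 (fun k => (v k : ℝ)) : EuclideanSpace ℝ (Fin d))
    (WithLp.toLp 2 (fun k => (w k : ℝ)))
  rw [← WithLp.toLp_sub] at this
  simp only [euclNorm_eq]
  have e : (fun k => (((v - w) k : ℤ) : ℝ)) = (fun k => (v k : ℝ)) - fun k => (w k : ℝ) := by
    ext k; simp
  rw [e]
  exact this

lemma abs_le_euclNorm {d : ℕ} (v : Fin d → ℤ) (k : Fin d) : |(v k : ℝ)| ≤ euclNorm v := by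
  apply Real.abs_le_sqrt
  exact Finset.single_le_sum (f := fun k => ((v k : ℝ)) ^ 2) (fun i _ => sq_nonneg _)
    (Finset.mem_univ k)

/-- A summable kernel on `ℤ^d`. -/
noncomputable def ker {d : ℕ} (v : Fin d → ℤ) : ℝ := ∏ k, ((1 + |(v k : ℝ)|) ^ 2)⁻¹

lemma ker_nonneg {d : ℕ} (v : Fin d → ℤ) : 0 ≤ ker v :=
  Finset.prod_nonneg fun k _ => by positivity

lemma ker_neg {d : ℕ} (v : Fin d → ℤ) : ker (-v) = ker v := by simp [ker]

lemma rpow_le_ker {d : ℕ} (v : Fin d → ℤ) :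
    (1 + euclNorm v) ^ (-(2 * d : ℝ)) ≤ ker v := by
  have h := euclNorm_nonneg v
  rw [ker, Finset.prod_inv_distrib, Real.rpow_neg (by positivity)]
  apply inv_anti₀
  · exact Finset.prod_pos fun k _ => by positivity
  have : ∏ k : Fin d, (1 + |(v k : ℝ)|) ^ 2 ≤ ∏ k : Fin d, (1 + euclNorm v) ^ 2 := by
    apply Finset.prod_le_prod
    · intro k _; positivity
    · intro k _
      have := abs_le_euclNorm v k
      gcongr
  refine this.trans_eq ?_
  rw [Finset.prod_const, Finset.card_univ, Fintype.card_fin, ← pow_mul, ← Real.rpow_natCast]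
  push_cast; rfl

lemma summable_one_ker : Summable fun n : ℤ => ((1 + |(n : ℝ)|) ^ 2)⁻¹ := by
  have h : Summable fun n : ℕ => ((1 + (n : ℝ)) ^ 2)⁻¹ := by
    have := (summable_nat_add_iff 1).2 (Real.summable_nat_pow_inv.2 (one_lt_two))
    refine this.congr fun n => ?_
    push_cast; rw [add_comm]
  refine Summable.of_nat_of_neg ?_ ?_ <;> simpa using h

lemma summable_ker {d : ℕ} : Summable (ker (d := d)) := by
  classical
  refine summable_of_sum_le (c := (∑' n : ℤ, ((1 + |(n : ℝ)|) ^ 2)⁻¹) ^ d) ker_nonneg fun s => ?_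
  have hs : s ⊆ Fintype.piFinset fun k : Fin d => s.image (fun v => v k) := by
    intro v hv
    rw [Fintype.mem_piFinset]
    exact fun k => Finset.mem_image_of_mem _ hv
  refine (Finset.sum_le_sum_of_subset_of_nonneg hs fun v _ _ => ker_nonneg v).trans ?_
  simp only [ker]
  rw [← Finset.prod_univ_sum (fun k : Fin d => s.image (fun v => v k))
    (fun _ (n : ℤ) => ((1 + |(n : ℝ)|) ^ 2)⁻¹)]
  refine (Finset.prod_le_prod (fun k _ => Finset.sum_nonneg fun n _ => by positivity) fun k _ =>
    summable_one_ker.sum_le_tsum _ fun n _ => by positivity).trans ?_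
  simp

/-- Diagonal multiplication operator by a bounded real function. -/
lemma exists_diag {d : ℕ} (φ : (Fin d → ℤ) → ℝ) (R : ℝ) (hφ : ∀ x, |φ x| ≤ R) :
    ∃ M : L2 d →L[ℂ] L2 d, ∀ (u : L2 d) x, (M u) x = (φ x : ℂ) * u x := by
  have hR : 0 ≤ R := (abs_nonneg _).trans (hφ 0)
  have hp : 0 < (2 : ENNReal).toReal := by norm_num
  have hle : ∀ (u : L2 d) x, ‖(φ x : ℂ) * u x‖ ^ (2 : ENNReal).toReal ≤
      R ^ (2 : ENNReal).toReal * ‖u x‖ ^ (2 : ENNReal).toReal := fun u x => by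
    rw [← Real.mul_rpow hR (norm_nonneg _)]
    apply Real.rpow_le_rpow (norm_nonneg _) _ hp.le
    rw [norm_mul, Complex.norm_real]
    gcongr
    exact hφ x
  have hmem : ∀ u : L2 d, Memℓp (fun x => (φ x : ℂ) * u x) 2 := fun u => by
    apply memℓp_gen
    exact Summable.of_nonneg_of_le (fun x => by positivity) (hle u)
      ((lp.hasSum_norm hp u).summable.mul_left _)
  let L : L2 d →ₗ[ℂ] L2 d :=
    { toFun := fun u => ⟨fun x => (φ x : ℂ) * u x, hmem u⟩
      map_add' := fun u v => by
        ext x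
        change (φ x : ℂ) * (u x + v x) = (φ x : ℂ) * u x + (φ x : ℂ) * v x
        ring
      map_smul' := fun c u => by
        ext x
        change (φ x : ℂ) * (c * u x) = c * ((φ x : ℂ) * u x)
        ring }
  refine ⟨L.mkContinuous R fun u => ?_, fun u x => rfl⟩
  apply lp.norm_le_of_forall_sum_le hp (by positivity)
  intro s
  rw [Real.mul_rpow hR (norm_nonneg _)]
  refine (Finset.sum_le_sum fun x _ => hle u x).trans ?_
  rw [← Finset.mul_sum]
  gcongr
  exact lp.sum_rpow_le_norm_rpow hp u s

lemma matrixEntry_eq {d : ℕ} (T : L2 d →L[ℂ] L2 d) (i j : Fin d → ℤ) :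
    matrixEntry T i j = T (stdBasis j) i := by
  rw [matrixEntry, stdBasis, lp.inner_single_left]
  simp

lemma schur {d : ℕ} (T : L2 d →L[ℂ] L2 d) (C : ℝ) (hC : 0 ≤ C)
    (h : ∀ i j, ‖matrixEntry T i j‖ ≤ C * ker (i - j)) :
    ‖T‖ ≤ C * ∑' v : Fin d → ℤ, ker v := by
  set G := ∑' v : Fin d → ℤ, ker v with hG
  have hG0 : 0 ≤ G := tsum_nonneg ker_nonneg
  have hp : 0 < (2 : ENNReal).toReal := by norm_num
  have hsq : ∀ (u : L2 d) (s : Finset (Fin d → ℤ)), ∑ i ∈ s, ‖u i‖ ^ 2 ≤ ‖u‖ ^ 2 := fun u s => by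
    simpa using lp.sum_rpow_le_norm_rpow hp u s
  have hker1 : ∀ (t : Finset (Fin d → ℤ)) i, ∑ j ∈ t, ker (i - j) ≤ G := fun t i => by
    have hs : Summable fun j => ker (i - j) :=
      (Equiv.subLeft i).summable_iff (f := ker (d := d)) |>.2 summable_ker
    refine (hs.sum_le_tsum t fun j _ => ker_nonneg _).trans_eq ?_
    exact (Equiv.subLeft i).tsum_eq (ker (d := d))
  have hker2 : ∀ (t : Finset (Fin d → ℤ)) j, ∑ i ∈ t, ker (i - j) ≤ G := fun t j => by
    refine le_trans (le_of_eq ?_) (hker1 t j)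
    refine Finset.sum_congr rfl fun i _ => ?_
    rw [← ker_neg, neg_sub]
  have hfin : ∀ (x y : L2 d) (s t : Finset (Fin d → ℤ)),
      ‖⟪∑ i ∈ s, lp.single 2 i (x i), T (∑ j ∈ t, lp.single 2 j (y j))⟫_ℂ‖ ≤
        C * G * ‖x‖ * ‖y‖ := by
    intro x y s t
    have e : ∀ (u : L2 d) i, (lp.single 2 i (u i) : L2 d) = u i • stdBasis i := fun u i => by
      rw [stdBasis, ← lp.single_smul]; simp
    have h1 : ‖⟪∑ i ∈ s, lp.single 2 i (x i), T (∑ j ∈ t, lp.single 2 j (y j))⟫_ℂ‖ ≤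
        ∑ i ∈ s, ∑ j ∈ t, C * (ker (i - j) * (‖x i‖ * ‖y j‖)) := by
      rw [map_sum, sum_inner]
      refine (norm_sum_le _ _).trans (Finset.sum_le_sum fun i _ => ?_)
      rw [inner_sum]
      refine (norm_sum_le _ _).trans (Finset.sum_le_sum fun j _ => ?_)
      rw [e, e, map_smul, inner_smul_left, inner_smul_right, norm_mul, norm_mul, RCLike.norm_conj]
      have := h i j
      rw [matrixEntry] at this
      calc _ ≤ ‖x i‖ * (‖y j‖ * (C * ker (i - j))) := by gcongr
        _ = _ := by ring
    refine h1.trans ?_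
    simp_rw [← Finset.mul_sum]
    rw [mul_assoc, mul_assoc]
    refine mul_le_mul_of_nonneg_left ?_ hC
    rw [← Finset.sum_product']
    have h2 := Finset.sum_mul_sq_le_sq_mul_sq (s ×ˢ t)
      (fun p => √(ker (p.1 - p.2)) * ‖x p.1‖) (fun p => √(ker (p.1 - p.2)) * ‖y p.2‖)
    have h3 : ∑ p ∈ s ×ˢ t, (√(ker (p.1 - p.2)) * ‖x p.1‖) ^ 2 ≤ G * ‖x‖ ^ 2 := by
      simp_rw [mul_pow, Real.sq_sqrt (ker_nonneg _)]
      rw [Finset.sum_product]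
      simp only [← Finset.sum_mul]
      calc _ ≤ ∑ i ∈ s, G * ‖x i‖ ^ 2 := by
            refine Finset.sum_le_sum fun i _ => ?_
            gcongr
            exact hker1 t i
        _ ≤ _ := by
            rw [← Finset.mul_sum]
            gcongr
            exact hsq x s
    have h4 : ∑ p ∈ s ×ˢ t, (√(ker (p.1 - p.2)) * ‖y p.2‖) ^ 2 ≤ G * ‖y‖ ^ 2 := by
      simp_rw [mul_pow, Real.sq_sqrt (ker_nonneg _)]
      rw [Finset.sum_product_right]
      simp only [← Finset.sum_mul]
      calc _ ≤ ∑ i ∈ t, G * ‖y i‖ ^ 2 := by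
            refine Finset.sum_le_sum fun i _ => ?_
            gcongr
            exact hker2 s i
        _ ≤ _ := by
            rw [← Finset.mul_sum]
            gcongr
            exact hsq y t
    have h5 : ∑ p ∈ s ×ˢ t, ker (p.1 - p.2) * (‖x p.1‖ * ‖y p.2‖) =
        ∑ p ∈ s ×ˢ t, (√(ker (p.1 - p.2)) * ‖x p.1‖) * (√(ker (p.1 - p.2)) * ‖y p.2‖) := by
      refine Finset.sum_congr rfl fun p _ => ?_
      rw [mul_mul_mul_comm, Real.mul_self_sqrt (ker_nonneg _)]
    rw [h5]
    refine (le_abs_self _).trans (abs_le_of_sq_le_sq ?_ (by positivity))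
    calc _ ≤ _ := h2
      _ ≤ (G * ‖x‖ ^ 2) * (G * ‖y‖ ^ 2) := by
        refine mul_le_mul h3 h4 (Finset.sum_nonneg fun p _ => sq_nonneg _) (by positivity)
      _ = _ := by ring
  have hlim1 : ∀ (x y : L2 d) (s : Finset (Fin d → ℤ)),
      ‖⟪∑ i ∈ s, lp.single 2 i (x i), T y⟫_ℂ‖ ≤ C * G * ‖x‖ * ‖y‖ := fun x y s => by
    have ht := lp.hasSum_single (by norm_num) y
    refine le_of_tendsto (f := fun t : Finset (Fin d → ℤ) => _)
      ((Continuous.tendsto (f := fun z : L2 d =>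
        ‖⟪∑ i ∈ s, lp.single 2 i (x i), T z⟫_ℂ‖) (by fun_prop) y).comp ht)
      (Filter.Eventually.of_forall fun t => hfin x y s t)
  have hlim2 : ∀ (x y : L2 d), ‖⟪x, T y⟫_ℂ‖ ≤ C * G * ‖x‖ * ‖y‖ := fun x y => by
    have ht := lp.hasSum_single (by norm_num) x
    refine le_of_tendsto
      ((Continuous.tendsto (f := fun z : L2 d => ‖⟪z, T y⟫_ℂ‖) (by fun_prop) x).comp ht)
      (Filter.Eventually.of_forall fun t => hlim1 x y t)
  refine ContinuousLinearMap.opNorm_le_bound _ (by positivity) fun y => ?_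
  have h6 := hlim2 (T y) y
  rw [inner_self_eq_norm_sq_to_K, norm_pow, RCLike.norm_ofReal, abs_norm] at h6
  rcases (norm_nonneg (T y)).eq_or_lt with h0 | h0
  · rw [← h0]; positivity
  · refine le_of_mul_le_mul_left ?_ h0
    nlinarith

lemma matrixEntry_adL {d : ℕ} (φ : (Fin d → ℤ) → ℝ) (M : L2 d →L[ℂ] L2 d)
    (hM : ∀ (u : L2 d) x, (M u) x = (φ x : ℂ) * u x) (T : L2 d →L[ℂ] L2 d) (i j : Fin d → ℤ) :
    matrixEntry (adL M T) i j = ((φ i - φ j : ℝ) : ℂ) * matrixEntry T i j := by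
  have hMe : M (stdBasis j) = (φ j : ℂ) • stdBasis j := by
    ext x
    rw [hM]
    change _ = (φ j : ℂ) * _
    rcases eq_or_ne x j with rfl | h
    · rfl
    · have : (stdBasis j : L2 d) x = 0 := lp.single_apply_ne 2 j 1 h
      rw [this]; simp
  rw [matrixEntry_eq, matrixEntry_eq, adL_apply]
  change (M (T (stdBasis j))) i - (T (M (stdBasis j))) i = _
  rw [hM, hMe, map_smul]
  change _ - (φ j : ℂ) * _ = _
  push_cast; ring

lemma matrixEntry_adL_pow {d : ℕ} (φ : (Fin d → ℤ) → ℝ) (M : L2 d →L[ℂ] L2 d)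
    (hM : ∀ (u : L2 d) x, (M u) x = (φ x : ℂ) * u x) (T : L2 d →L[ℂ] L2 d) (i j : Fin d → ℤ)
    (k : ℕ) :
    matrixEntry ((adL M ^ k) T) i j = ((φ i - φ j : ℝ) : ℂ) ^ k * matrixEntry T i j := by
  induction k with
  | zero => simp
  | succ k ih => rw [adL_pow_succ, matrixEntry_adL φ M hM, ih, pow_succ]; ring

lemma norm_matrixEntry_le {d : ℕ} (T : L2 d →L[ℂ] L2 d) (i j : Fin d → ℤ) :
    ‖matrixEntry T i j‖ ≤ ‖T‖ := by
  have hb : ∀ i : Fin d → ℤ, ‖(stdBasis i : L2 d)‖ = 1 := fun i => by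
    rw [stdBasis, lp.norm_single (by norm_num)]; simp
  refine (norm_inner_le_norm _ _).trans ?_
  rw [hb, one_mul]
  refine (T.le_opNorm _).trans ?_
  rw [hb, mul_one]

lemma exp_eq_cfc {d : ℕ} (H : L2 d →L[ℂ] L2 d) (hH : IsSelfAdjoint H) (t : ℝ) :
    NormedSpace.exp (t • ((2 * Real.pi * Complex.I : ℂ) • H)) =
      cfc (fun z : ℂ => Complex.exp ((2 * Real.pi * Complex.I * t) * z)) H := by
  have hn : IsStarNormal H := hH.isStarNormal
  have e : t • ((2 * Real.pi * Complex.I : ℂ) • H) = (2 * Real.pi * Complex.I * t : ℂ) • H := by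
    rw [mul_comm (2 * Real.pi * Complex.I : ℂ) t, mul_smul (t : ℂ), Complex.coe_smul]
    rfl
  have h2 : IsStarNormal ((2 * Real.pi * Complex.I * t : ℂ) • H) := by
    infer_instance
  rw [e, ← CFC.complex_exp_eq_normedSpace_exp h2]
  exact (cfc_comp_smul (2 * Real.pi * Complex.I * t : ℂ) Complex.exp H).symm

lemma norm_exp_spec {d : ℕ} (H : L2 d →L[ℂ] L2 d) (hH : IsSelfAdjoint H) (t : ℝ) (z : ℂ)
    (hz : z ∈ spectrum ℂ H) : ‖Complex.exp ((2 * Real.pi * Complex.I * t) * z)‖ = 1 := by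
  have h : z = (z.re : ℂ) := hH.mem_spectrum_eq_re hz
  rw [h, Complex.norm_exp]
  simp

lemma ad_bound {d : ℕ} (H : L2 d →L[ℂ] L2 d) (hHrd : RapidDecay H) (a : ℂ) (k : ℕ) :
    ∃ c : ℝ, ∀ (φ : (Fin d → ℤ) → ℝ) (M : L2 d →L[ℂ] L2 d),
      (∀ (u : L2 d) x, (M u) x = (φ x : ℂ) * u x) →
      (∀ x y, |φ x - φ y| ≤ euclNorm (x - y)) → ‖(adL M ^ k) (a • H)‖ ≤ c := by
  obtain ⟨C, hC0, hC⟩ := hHrd (k + 2 * d) (by positivity)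
  refine ⟨(‖a‖ * C) * ∑' v : Fin d → ℤ, ker v, fun φ M hM hφ => ?_⟩
  refine schur _ _ (by positivity) fun i j => ?_
  have ha : matrixEntry (a • H) i j = a * matrixEntry H i j := by
    rw [matrixEntry_eq, matrixEntry_eq]; rfl
  rw [matrixEntry_adL_pow φ M hM, ha, norm_mul, norm_mul, norm_pow, Complex.norm_real,
    Real.norm_eq_abs]
  have hn := euclNorm_nonneg (i - j)
  calc |φ i - φ j| ^ k * (‖a‖ * ‖matrixEntry H i j‖)
      ≤ (1 + euclNorm (i - j)) ^ k *
        (‖a‖ * (C * (1 + euclNorm (i - j)) ^ (-(k + 2 * d : ℝ)))) := by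
        gcongr
        · linarith [hφ i j]
        · exact hC i j
    _ = ‖a‖ * C * (1 + euclNorm (i - j)) ^ (-(2 * d : ℝ)) := by
        rw [neg_add, Real.rpow_add (by positivity), Real.rpow_neg (by positivity) (k : ℝ),
          Real.rpow_natCast]
        field_simp
    _ ≤ ‖a‖ * C * ker (i - j) := by
        gcongr
        exact rpow_le_ker _

lemma exp_entry_bound {d : ℕ} (H : L2 d →L[ℂ] L2 d) (hH : IsSelfAdjoint H) (hHrd : RapidDecay H)
    (m : ℕ) : ∃ C : ℝ, 0 ≤ C ∧ ∀ (t : ℝ) (i j : Fin d → ℤ),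
      ‖matrixEntry (NormedSpace.exp (t • ((2 * Real.pi * Complex.I : ℂ) • H))) i j‖ *
        (1 + euclNorm (i - j)) ^ m ≤ C * (1 + |t|) ^ m := by
  choose c hc using fun k => ad_bound H hHrd (2 * Real.pi * Complex.I : ℂ) k
  obtain ⟨C, hC0, hC⟩ := adL_exp_bound (A := L2 d →L[ℂ] L2 d) c m
  have hU : ∀ t : ℝ, ‖NormedSpace.exp (t • ((2 * Real.pi * Complex.I : ℂ) • H))‖ ≤ 1 := fun t => by
    rw [exp_eq_cfc H hH]
    exact norm_cfc_le zero_le_one fun z hz => (norm_exp_spec H hH t z hz).le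
  refine ⟨2 ^ (m - 1) * (1 + C), by positivity, fun t i j => ?_⟩
  set N := euclNorm (i - j) with hN
  have hN0 : 0 ≤ N := euclNorm_nonneg _
  let φ : (Fin d → ℤ) → ℝ := fun x => min (euclNorm (x - j)) N
  obtain ⟨M, hM⟩ := exists_diag φ N (fun x => by
    rw [abs_of_nonneg (le_min (euclNorm_nonneg _) hN0)]
    exact min_le_right _ _)
  have hφ : ∀ x y, |φ x - φ y| ≤ euclNorm (x - y) := fun x y => by
    have h1 := abs_min_sub_min_le_max (euclNorm (x - j)) N (euclNorm (y - j)) N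
    have h2 := euclNorm_abs_sub (x - j) (y - j)
    rw [sub_sub_sub_cancel_right] at h2
    refine h1.trans (max_le h2 ?_)
    simpa using euclNorm_nonneg _
  have hij : φ i - φ j = N := by
    have : euclNorm (0 : Fin d → ℤ) = 0 := by simp [euclNorm]
    simp [φ, ← hN, this, hN0]
  have key := hC M ((2 * Real.pi * Complex.I : ℂ) • H) hU (fun k => hc k φ M hM hφ) t
  have key2 := (norm_matrixEntry_le _ i j).trans key
  rw [matrixEntry_adL_pow φ M hM, hij, norm_mul, norm_pow, Complex.norm_real, Real.norm_eq_abs,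
    abs_of_nonneg hN0] at key2
  set u := ‖matrixEntry (NormedSpace.exp (t • ((2 * Real.pi * Complex.I : ℂ) • H))) i j‖ with hu
  have hu0 : 0 ≤ u := norm_nonneg _
  have hu1 : u ≤ 1 := (norm_matrixEntry_le _ i j).trans (hU t)
  have hpow := add_pow_le zero_le_one hN0 m
  have h1t : 1 ≤ (1 + |t|) ^ m := one_le_pow₀ (by linarith [abs_nonneg t])
  calc u * (1 + N) ^ m ≤ u * (2 ^ (m - 1) * (1 ^ m + N ^ m)) := by gcongr
    _ = 2 ^ (m - 1) * (u + N ^ m * u) := by rw [one_pow]; ring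
    _ ≤ 2 ^ (m - 1) * ((1 + |t|) ^ m + C * (1 + |t|) ^ m) := by
        refine mul_le_mul_of_nonneg_left ?_ (by positivity)
        exact add_le_add (hu1.trans h1t) key2
    _ = _ := by ring

open FourierTransform MeasureTheory in
lemma main_aux {d : ℕ} (H : L2 d →L[ℂ] L2 d)
    (hH : IsSelfAdjoint H) (hHrd : RapidDecay H) (f : SchwartzMap ℝ ℂ) :
    RapidDecay (cfc (fun z : ℂ => f z.re) H) := by
  have hn : IsStarNormal H := hH.isStarNormal
  set g : SchwartzMap ℝ ℂ := 𝓕 f with hg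
  have hf : ∀ x : ℝ, f x = ∫ t : ℝ, g t * Complex.exp ((2 * Real.pi * Complex.I * t) * x) := by
    intro x
    have h1 : f = 𝓕⁻ g := (FourierTransform.fourierInv_fourier_eq f).symm
    rw [h1, SchwartzMap.fourierInv_coe, Real.fourierInv_eq']
    refine integral_congr_ae (Filter.Eventually.of_forall fun t => ?_)
    simp only [smul_eq_mul]
    rw [mul_comm]
    congr 2
    simp
    ring
  let F : ℝ → ℂ → ℂ := fun t z => g t * Complex.exp ((2 * Real.pi * Complex.I * t) * z)
  have hFc : ContinuousOn (Function.uncurry F) (Set.univ ×ˢ spectrum ℂ H) := by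
    apply Continuous.continuousOn
    have := g.continuous
    unfold F Function.uncurry
    fun_prop
  have hFb : ∀ᵐ t : ℝ, ∀ z ∈ spectrum ℂ H, ‖F t z‖ ≤ ‖g t‖ :=
    Filter.Eventually.of_forall fun t z hz => by
      simp only [F, norm_mul, norm_exp_spec H hH t z hz, mul_one, le_refl]
  have hgi : HasFiniteIntegral (fun t => ‖g t‖) volume := g.integrable.norm.2
  have e1 : cfc (fun z : ℂ => f z.re) H = ∫ t : ℝ, cfc (F t) H := by
    rw [← cfc_integral F (fun t => ‖g t‖) H hFc hFb hgi]
    refine cfc_congr fun z hz => ?_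
    have h : z = (z.re : ℂ) := hH.mem_spectrum_eq_re hz
    simp only [F]
    rw [hf, ← h]
  have hint : Integrable (fun t : ℝ => cfc (F t) H) :=
    integrable_cfc F (fun t => ‖g t‖) H hFc hFb hgi
  have e2 : ∀ t, cfc (F t) H =
      g t • NormedSpace.exp (t • ((2 * Real.pi * Complex.I : ℂ) • H)) := fun t => by
    rw [exp_eq_cfc H hH, ← cfc_smul (g t) _ H]
    rfl
  intro μ hμ
  obtain ⟨C, hC0, hC⟩ := exp_entry_bound H hH hHrd ⌈μ⌉₊
  set m := ⌈μ⌉₊ with hm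
  have hgint : Integrable (fun t : ℝ => (1 + |t|) ^ m * ‖g t‖) := by
    have h1 : Integrable (fun t : ℝ => 2 ^ (m - 1) * (‖g t‖ + ‖t‖ ^ m * ‖g t‖)) :=
      (g.integrable.norm.add (g.integrable_pow_mul volume m)).const_mul _
    have := g.continuous
    refine h1.mono' (Continuous.aestronglyMeasurable (by fun_prop))
      (Filter.Eventually.of_forall fun t => ?_)
    rw [Real.norm_eq_abs, abs_of_nonneg (by positivity)]
    have hpow := add_pow_le zero_le_one (abs_nonneg t) m
    calc _ ≤ (2 ^ (m - 1) * (1 ^ m + |t| ^ m)) * ‖g t‖ := by gcongr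
      _ = _ := by rw [one_pow, Real.norm_eq_abs]; ring
  refine ⟨C * ∫ t : ℝ, (1 + |t|) ^ m * ‖g t‖, mul_nonneg hC0
    (integral_nonneg fun t => by positivity), fun i j => ?_⟩
  have hN0 : 0 ≤ euclNorm (i - j) := euclNorm_nonneg _
  set N := euclNorm (i - j) with hN
  let ev : (L2 d →L[ℂ] L2 d) →L[ℂ] ℂ :=
    (innerSL ℂ (stdBasis i : L2 d)).comp (ContinuousLinearMap.apply ℂ (L2 d) (stdBasis j : L2 d))
  have hev : ∀ T, ev T = matrixEntry T i j := fun T => rfl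
  rw [e1, ← hev, ← ev.integral_comp_comm hint]
  have hb : ∀ t : ℝ, ‖ev (cfc (F t) H)‖ ≤ (C * (1 + N) ^ (-μ)) * ((1 + |t|) ^ m * ‖g t‖) := by
    intro t
    rw [e2, map_smul, hev, norm_smul]
    have h1 := hC t i j
    rw [← hN] at h1
    have h2 : (1 + N) ^ μ ≤ (1 + N) ^ m := by
      rw [← Real.rpow_natCast]
      exact Real.rpow_le_rpow_of_exponent_le (by linarith) (Nat.le_ceil μ)
    set u := ‖matrixEntry (NormedSpace.exp (t • ((2 * Real.pi * Complex.I : ℂ) • H))) i j‖ with hu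
    have hu0 : 0 ≤ u := norm_nonneg _
    have h3 : u ≤ C * (1 + |t|) ^ m * (1 + N) ^ (-μ) := by
      rw [Real.rpow_neg (by positivity), ← div_eq_mul_inv, le_div_iff₀ (by positivity)]
      exact (mul_le_mul_of_nonneg_left h2 hu0).trans h1
    calc ‖g t‖ * u ≤ ‖g t‖ * (C * (1 + |t|) ^ m * (1 + N) ^ (-μ)) := by gcongr
      _ = _ := by ring
  refine (norm_integral_le_of_norm_le (hgint.const_mul _)
    (Filter.Eventually.of_forall hb)).trans_eq ?_
  rw [integral_const_mul]
  ring

/-- If `H` is a bounded self-adjoint operator on `ℓ²(ℤ^d)` (`d ≥ 1`) with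
rapidly decaying matrix entries and `f : ℝ → ℂ` is a Schwartz function, then `f(H)` (formed
through the continuous functional calculus of the self-adjoint operator `H`, applied through
the real part of the spectral variable since the spectrum of `H` is real) also has rapidly
decaying matrix entries. -/
theorem rapid_decay_functional_calculus
    {d : ℕ} (hd : 1 ≤ d)
    (H : lp (fun _ : Fin d → ℤ => ℂ) 2 →L[ℂ] lp (fun _ : Fin d → ℤ => ℂ) 2)
    (hH : IsSelfAdjoint H) (hHrd : RapidDecay H) (f : SchwartzMap ℝ ℂ) :
    RapidDecay (cfc (fun z : ℂ => f z.re) H) := by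
  exact main_aux H hH hHrd f
end

section
/- Let d ≥ 1 and let a : ℤ^d → ℂ be a finitely supported function. Let T be a bounded operator on ℓ²(ℤ^d) whose matrix entries satisfy T_{ij} = a(i−j) for all i, j ∈ ℤ^d. Then the spectrum of T equals the range of the symbol of a: spec(T) = { ∑_{m ∈ ℤ^d} a(m)·e^{2πi k·m} : k ∈ ℝ^d }, where k·m denotes the Euclidean inner product. -/
open scoped InnerProductSpace Real
open ContinuousLinearMap

lemma aux_gelfand {B : Type*} [NormedRing B] [NormedAlgebra ℂ B] [CompleteSpace B]
    [NormOneClass B] {ι : Type*} (S : ι → B) (hc : ∀ m n, S m * S n = S n * S m) :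
    ∃ A : Subalgebra ℂ B, (∀ m, S m ∈ A) ∧ Nonempty (A →ₐ[ℂ] ℂ) ∧
      (∀ (χ : A →ₐ[ℂ] ℂ) (x : A), ‖χ x‖ ≤ ‖(x : B)‖) ∧
      ∀ (x : A) (z : ℂ), z ∈ spectrum ℂ (x : B) ↔ ∃ χ : A →ₐ[ℂ] ℂ, χ x = z := by
  let C : Subalgebra ℂ B := Subalgebra.centralizer ℂ (Set.range S)
  let A : Subalgebra ℂ B := Subalgebra.centralizer ℂ (C : Set B)
  have hSC : ∀ m, S m ∈ C := by
    intro m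
    rw [Subalgebra.mem_centralizer_iff]
    rintro _ ⟨n, rfl⟩
    exact hc n m
  have hSA : ∀ m, S m ∈ A := by
    intro m
    rw [Subalgebra.mem_centralizer_iff]
    intro g hg
    exact ((Subalgebra.mem_centralizer_iff ℂ).1 hg (S m) ⟨m, rfl⟩).symm
  have hAC : ∀ x ∈ A, x ∈ C := by
    intro x hx
    rw [Subalgebra.mem_centralizer_iff]
    rintro _ ⟨n, rfl⟩
    exact (Subalgebra.mem_centralizer_iff ℂ).1 hx (S n) (hSC n)
  have hcomm : ∀ x y : A, x * y = y * x := by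
    intro x y
    apply Subtype.ext
    exact (Subalgebra.mem_centralizer_iff ℂ).1 y.2 x.1 (hAC _ x.2)
  have hclosed : IsClosed (A : Set B) := Set.isClosed_centralizer _
  have : CompleteSpace A := hclosed.completeSpace_coe
  letI : NormedCommRing A := { (inferInstance : NormedRing A) with mul_comm := hcomm }
  have hnt : Nontrivial B := NormOneClass.nontrivial
  have hn1 : NormOneClass A := ⟨norm_one (α := B)⟩
  have hne : Nonempty (WeakDual.characterSpace ℂ A) := inferInstance
  have hunit : ∀ x : A, IsUnit (x : B) → IsUnit x := by
    intro x hx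
    obtain ⟨u, hu⟩ := hx
    have hm : (↑u⁻¹ : B) ∈ A := by
      rw [Subalgebra.mem_centralizer_iff]
      intro g hg
      have h := (Subalgebra.mem_centralizer_iff ℂ).1 x.2 g hg
      rw [← hu] at h
      exact (Commute.units_inv_right (a := g) (u := u) h)
    exact IsUnit.of_mul_eq_one ⟨_, hm⟩ (Subtype.ext (by simp [← hu]))
  have hspec : ∀ x : A, spectrum ℂ (x : B) = spectrum ℂ x := by
    intro x
    ext z
    rw [spectrum.mem_iff, spectrum.mem_iff, not_iff_not]
    constructor
    · intro h
      exact hunit (algebraMap ℂ A z - x) h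
    · intro h
      exact h.map A.val
  refine ⟨A, hSA, hne.map WeakDual.CharacterSpace.equivAlgHom, ?_, ?_⟩
  · intro χ x
    exact AlgHom.norm_apply_le_self χ x
  · intro x z
    rw [hspec, WeakDual.CharacterSpace.mem_spectrum_iff_exists]
    constructor
    · rintro ⟨f, hf⟩
      exact ⟨WeakDual.CharacterSpace.equivAlgHom f, hf⟩
    · rintro ⟨χ, hχ⟩
      exact ⟨WeakDual.CharacterSpace.equivAlgHom.symm χ, hχ⟩

/-- the standard Hilbert basis -/
noncomputable def stdHB (d : ℕ) : HilbertBasis (Fin d → ℤ) ℂ (lp (fun _ : Fin d → ℤ => ℂ) 2) :=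
  HilbertBasis.ofRepr (LinearIsometryEquiv.refl ℂ _)

lemma stdHB_apply {d : ℕ} (i : Fin d → ℤ) : stdHB d i = stdBasis i := by
  classical
  rw [← HilbertBasis.repr_symm_single]
  unfold stdBasis
  simp only [stdHB]
  congr

lemma aux_ext {d : ℕ} {T U : lp (fun _ : Fin d → ℤ => ℂ) 2 →L[ℂ] lp (fun _ : Fin d → ℤ => ℂ) 2}
    (h : ∀ i, T (stdBasis i) = U (stdBasis i)) : T = U := by
  refine ContinuousLinearMap.ext_on (s := Set.range (stdHB d)) ?_ ?_
  · have := (stdHB d).dense_span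
    rwa [Submodule.dense_iff_topologicalClosure_eq_top]
  · rintro _ ⟨i, rfl⟩
    rw [stdHB_apply]
    exact h i

lemma aux_inner {d : ℕ} (i j : Fin d → ℤ) :
    ⟪stdBasis i, stdBasis j⟫_ℂ = if i = j then 1 else 0 := by
  classical
  rw [← stdHB_apply, ← stdHB_apply]
  exact orthonormal_iff_ite.1 (stdHB d).orthonormal i j

lemma aux_unitary {d : ℕ} (c : (Fin d → ℤ) → ℂ) (hc : ∀ i, ‖c i‖ = 1)
    (σ : Equiv.Perm (Fin d → ℤ)) :
    ∃ U : lp (fun _ : Fin d → ℤ => ℂ) 2 ≃ₗᵢ[ℂ] lp (fun _ : Fin d → ℤ => ℂ) 2,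
      ∀ i, U (stdBasis i) = c i • stdBasis (σ i) := by
  classical
  let v : (Fin d → ℤ) → lp (fun _ : Fin d → ℤ => ℂ) 2 := fun i => c i • stdBasis (σ i)
  have hv : Orthonormal ℂ v := by
    rw [orthonormal_iff_ite]
    intro i j
    simp only [v, inner_smul_left, inner_smul_right, aux_inner, σ.injective.eq_iff]
    split_ifs with h
    · subst h
      rw [mul_one, Complex.mul_conj, Complex.normSq_eq_norm_sq, hc]
      simp
    · simp
  have hsp : ⊤ ≤ (Submodule.span ℂ (Set.range v)).topologicalClosure := by
    rw [← (stdHB d).dense_span]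
    apply Submodule.topologicalClosure_mono
    rw [Submodule.span_le]
    rintro _ ⟨i, rfl⟩
    have h0 : c (σ.symm i) ≠ 0 := by
      intro h
      have := hc (σ.symm i)
      simp [h] at this
    have : stdHB d i = (c (σ.symm i))⁻¹ • v (σ.symm i) := by
      simp [v, stdHB_apply, smul_smul, h0]
    rw [this]
    exact Submodule.smul_mem _ _ (Submodule.subset_span ⟨_, rfl⟩)
  refine ⟨(stdHB d).repr.trans (HilbertBasis.mk hv hsp).repr.symm, fun i => ?_⟩
  rw [LinearIsometryEquiv.trans_apply, ← stdHB_apply, HilbertBasis.repr_self,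
    HilbertBasis.repr_symm_single, HilbertBasis.coe_mk]

/-- the character of `ℤ^d` -/
noncomputable def chF {d : ℕ} (k : Fin d → ℝ) (m : Fin d → ℤ) : ℂ :=
  Complex.exp (((2 * π * ∑ l : Fin d, k l * (m l : ℝ)) : ℝ) * Complex.I)

lemma chF_norm {d : ℕ} (k : Fin d → ℝ) (m : Fin d → ℤ) : ‖chF k m‖ = 1 :=
  Complex.norm_exp_ofReal_mul_I _

lemma chF_add {d : ℕ} (k : Fin d → ℝ) (m n : Fin d → ℤ) :
    chF k (m + n) = chF k m * chF k n := by
  unfold chF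
  rw [← Complex.exp_add]
  congr 1
  simp only [Pi.add_apply, Int.cast_add, mul_add, Finset.sum_add_distrib]
  push_cast
  ring

lemma chF_add' {d : ℕ} (k k' : Fin d → ℝ) (m : Fin d → ℤ) :
    chF (k + k') m = chF k m * chF k' m := by
  unfold chF
  rw [← Complex.exp_add]
  congr 1
  simp only [Pi.add_apply, add_mul, Finset.sum_add_distrib]
  push_cast
  ring

lemma chF_exists {d : ℕ} (φ : (Fin d → ℤ) → ℂ) (h0 : φ 0 = 1)
    (hadd : ∀ m n, φ (m + n) = φ m * φ n) (hle : ∀ m, ‖φ m‖ ≤ 1) :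
    ∃ k : Fin d → ℝ, ∀ m, φ m = chF k m := by
  have hn : ∀ m, ‖φ m‖ = 1 := by
    intro m
    have h1 : ‖φ m‖ * ‖φ (-m)‖ = 1 := by
      rw [← norm_mul, ← hadd, add_neg_cancel, h0, norm_one]
    have := hle m
    have := hle (-m)
    nlinarith [norm_nonneg (φ m), norm_nonneg (φ (-m))]
  let k : Fin d → ℝ := fun l => Complex.arg (φ (Pi.single l 1)) / (2 * π)
  have hk : ∀ l, chF k (Pi.single l 1) = φ (Pi.single l 1) := by
    intro l
    have h2 : (∑ l' : Fin d, k l' * (((Pi.single l 1 : Fin d → ℤ) l' : ℤ) : ℝ)) = k l := by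
      rw [Finset.sum_eq_single l]
      · simp
      · intro b _ hb
        simp [Pi.single_eq_of_ne hb]
      · simp
    unfold chF
    rw [h2]
    have h3 : 2 * π * k l = Complex.arg (φ (Pi.single l 1)) := by
      simp only [k]
      field_simp
    rw [h3]
    have := Complex.norm_mul_exp_arg_mul_I (φ (Pi.single l 1))
    rwa [hn, Complex.ofReal_one, one_mul] at this
  refine ⟨k, fun m => ?_⟩
  have hinv : ∀ m, φ (-m) = (φ m)⁻¹ ∧ chF k (-m) = (chF k m)⁻¹ := by
    intro m
    constructor
    · apply eq_inv_of_mul_eq_one_left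
      rw [← hadd, neg_add_cancel, h0]
    · apply eq_inv_of_mul_eq_one_left
      rw [← chF_add, neg_add_cancel]
      simp [chF]
  let H : AddSubgroup (Fin d → ℤ) :=
    { carrier := {m | φ m = chF k m}
      zero_mem' := by simp [chF, h0]
      add_mem' := by
        intro m n hm hn
        simp only [Set.mem_setOf_eq] at *
        rw [hadd, chF_add, hm, hn]
      neg_mem' := by
        intro m hm
        simp only [Set.mem_setOf_eq] at *
        rw [(hinv m).1, (hinv m).2, hm] }
  have hm : m ∈ H := by
    have : m = ∑ l, m l • (Pi.single l 1 : Fin d → ℤ) := by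
      conv_lhs => rw [← Finset.univ_sum_single m]
      refine Finset.sum_congr rfl fun l _ => ?_
      rw [← Pi.single_smul]
      simp
    rw [this]
    exact H.sum_mem fun l _ => H.zsmul_mem (hk l).symm _
  exact hm

/-- If `T` is a bounded operator on `ℓ²(ℤ^d)` (`d ≥ 1`) whose matrix entries
are given by convolution with a finitely supported function `a : ℤ^d → ℂ`, i.e.
`T_{ij} = a(i - j)`, then the spectrum of `T` equals the range of the symbol of `a`:
`spec(T) = { ∑_m a(m) e^{2πi k·m} : k ∈ ℝ^d }`. -/
theorem spectrum_of_convolution_operator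
    {d : ℕ} (hd : 1 ≤ d) (a : (Fin d → ℤ) → ℂ) (ha : (Function.support a).Finite)
    (T : lp (fun _ : Fin d → ℤ => ℂ) 2 →L[ℂ] lp (fun _ : Fin d → ℤ => ℂ) 2)
    (hT : ∀ i j : Fin d → ℤ, matrixEntry T i j = a (i - j)) :
    spectrum ℂ T = Set.range (fun k : Fin d → ℝ =>
      ∑ᶠ m : Fin d → ℤ,
        a m * Complex.exp (((2 * π * ∑ l : Fin d, k l * (m l : ℝ)) : ℝ) * Complex.I)) := by
  classical
  have hsh : ∀ m : Fin d → ℤ, ∃ U : lp (fun _ : Fin d → ℤ => ℂ) 2 ≃ₗᵢ[ℂ]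
      lp (fun _ : Fin d → ℤ => ℂ) 2, ∀ i, U (stdBasis i) = stdBasis (i + m) := by
    intro m
    obtain ⟨U, hU⟩ := aux_unitary (fun _ => 1) (by simp) (Equiv.addRight m)
    exact ⟨U, fun i => by simpa using hU i⟩
  choose U hU using hsh
  let S : (Fin d → ℤ) → (lp (fun _ : Fin d → ℤ => ℂ) 2 →L[ℂ] lp (fun _ : Fin d → ℤ => ℂ) 2) :=
    fun m => ((U m).toContinuousLinearEquiv : _ →L[ℂ] _)
  have hS : ∀ m i, S m (stdBasis i) = stdBasis (i + m) := hU
  have hSn : ∀ m, ‖S m‖ ≤ 1 := fun m => (U m).toLinearIsometry.norm_toContinuousLinearMap_le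
  have hS0 : S 0 = 1 := aux_ext fun i => by simp [hS]
  have hSadd : ∀ m n, S (m + n) = S m * S n := fun m n => aux_ext fun i => by
    rw [ContinuousLinearMap.mul_apply, hS, hS, hS]
    congr 1
    abel
  let P : ((Fin d → ℤ) → ℂ) → (lp (fun _ : Fin d → ℤ => ℂ) 2 →L[ℂ]
      lp (fun _ : Fin d → ℤ => ℂ) 2) := fun b => ∑ m ∈ ha.toFinset, b m • S m
  have hP : ∀ b i, P b (stdBasis i) = ∑ m ∈ ha.toFinset, b m • stdBasis (i + m) := by
    intro b i
    simp [P, ContinuousLinearMap.sum_apply, hS]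
  have hTP : T = P a := by
    refine aux_ext fun j => ?_
    apply (stdHB d).repr.injective
    ext i
    rw [HilbertBasis.repr_apply_apply, HilbertBasis.repr_apply_apply, stdHB_apply]
    have h1 := hT i j
    unfold matrixEntry at h1
    rw [h1, hP, inner_sum]
    simp only [inner_smul_right, aux_inner]
    have h2 : ∀ m, (i = j + m) ↔ (m = i - j) := fun m =>
      ⟨fun h => by rw [h]; abel, fun h => by rw [h]; abel⟩
    simp only [h2, mul_ite, mul_one, mul_zero, Finset.sum_ite_eq']
    split_ifs with h
    · rfl
    · simpa using h
  have hsym : ∀ k : Fin d → ℝ, (∑ᶠ m : Fin d → ℤ,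
        a m * Complex.exp (((2 * π * ∑ l : Fin d, k l * (m l : ℝ)) : ℝ) * Complex.I))
      = ∑ m ∈ ha.toFinset, a m * chF k m := by
    intro k
    apply finsum_eq_sum_of_support_subset
    intro m hm
    simp only [Function.mem_support] at hm
    simpa using left_ne_zero_of_mul hm
  haveI : Nontrivial (lp (fun _ : Fin d → ℤ => ℂ) 2) :=
    ⟨stdBasis 0, 0, fun h => by
      have := aux_inner (d := d) 0 0
      simp [h] at this⟩
  obtain ⟨A, hSA, hne, hbd, hsp⟩ := aux_gelfand S (fun m n => by
    rw [← hSadd, ← hSadd, add_comm])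
  have hPA : ∀ b, P b ∈ A := fun b => A.sum_mem fun m _ => A.smul_mem (hSA m) _
  have hχ : ∀ χ : A →ₐ[ℂ] ℂ, ∃ k : Fin d → ℝ, ∀ b,
      χ ⟨P b, hPA b⟩ = ∑ m ∈ ha.toFinset, b m * chF k m := by
    intro χ
    obtain ⟨k, hk⟩ := chF_exists (fun m => χ ⟨S m, hSA m⟩)
      (by
        have : (⟨S 0, hSA 0⟩ : A) = 1 := Subtype.ext hS0
        simp only [this, map_one])
      (fun m n => by
        have : (⟨S (m + n), hSA _⟩ : A) = ⟨S m, hSA m⟩ * ⟨S n, hSA n⟩ := Subtype.ext (hSadd m n)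
        simp only [this, map_mul])
      (fun m => (hbd χ _).trans (hSn m))
    refine ⟨k, fun b => ?_⟩
    have : (⟨P b, hPA b⟩ : A) = ∑ m ∈ ha.toFinset, b m • ⟨S m, hSA m⟩ := by
      apply Subtype.ext
      simp [P]
    rw [this, map_sum]
    refine Finset.sum_congr rfl fun m _ => ?_
    exact (AlgHom.map_smul_of_tower χ (b m) _).trans (by rw [smul_eq_mul, ← hk m])
  ext z
  constructor
  · intro hz
    rw [hTP] at hz
    obtain ⟨χ, hχz⟩ := (hsp ⟨P a, hPA a⟩ z).1 hz
    obtain ⟨k, hk⟩ := hχ χ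
    exact ⟨k, by simp only [hsym]; rw [← hk, hχz]⟩
  · rintro ⟨k, rfl⟩
    simp only [hsym]
    obtain ⟨χ⟩ := hne
    obtain ⟨k₀, hk₀⟩ := hχ χ
    obtain ⟨M, hM⟩ := aux_unitary (chF (k - k₀)) (chF_norm _) (Equiv.refl _)
    let u := M.toContinuousLinearEquiv.toUnit
    have hu : ∀ i, (u : lp (fun _ : Fin d → ℤ => ℂ) 2 →L[ℂ] lp (fun _ : Fin d → ℤ => ℂ) 2)
        (stdBasis i) = chF (k - k₀) i • stdBasis i := hM
    have hconj : ↑u * P a * ↑u⁻¹ = P (fun m => a m * chF (k - k₀) m) := by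
      rw [Units.mul_inv_eq_iff_eq_mul]
      refine aux_ext fun i => ?_
      rw [ContinuousLinearMap.mul_apply, ContinuousLinearMap.mul_apply, hu, map_smul, hP, hP,
        map_sum, Finset.smul_sum]
      refine Finset.sum_congr rfl fun m _ => ?_
      rw [map_smul, hu, smul_smul, smul_smul, chF_add]
      congr 1
      ring
    rw [hTP, ← spectrum.units_conjugate (u := u), hconj]
    refine (hsp ⟨P _, hPA _⟩ _).2 ⟨χ, ?_⟩
    rw [hk₀]
    refine Finset.sum_congr rfl fun m _ => ?_
    rw [mul_assoc, ← chF_add', sub_add_cancel]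
end
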